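/- Let p ≡ −1 (mod 8) be a prime and let h(−2p) denote the class number of the imaginary quadratic field ℚ(√(−2p)). Then 4 ∥ h(−2p) (i.e., 4 ∣ h(−2p) and 8 ∤ h(−2p)) if and only if p ≡ 7 (mod 16). -/

import Mathlib

open Polynomial NumberField

/-!
The discriminant `-8p` of `ℤ[√-2p]` has two prime divisors, so genus theory makes the class `t` of
the prime above `2` the only class of order `2`. Thue's lemma gives `u² = 2v² + p`, and then
`(2v)² + 2p = 2u²` shows that the class `i` of the ideal `(u, 2v + √-2p)` satisfies `i² = t`. Hence
`4` divides the class number, and `8` does exactly when `i` is a square. The squares have index `2`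
in the class group, so they form the kernel of the genus character, which sends `i` to the Jacobi
symbol `(2 / u)`. Reading `u² = 2v² + p` modulo `16` turns `u ≡ ±1 (mod 8)` into `p ≡ 15 (mod 16)`.
The genus character is nontrivial because Dirichlet's theorem on primes in arithmetic progressions
provides a prime `q ≡ 5 (mod 8)` that splits in `ℚ(√-2p)`.
-/

section TwoTorsion

theorem orderOf_eq_four {M : Type*} [Monoid M] {i : M} (hi : i ^ 2 ≠ 1) (hi' : (i ^ 2) ^ 2 = 1) :
    orderOf i = 4 :=
  orderOf_eq_prime_pow (p := 2) (n := 1) (by simpa using hi) (by simpa [← pow_mul] using hi')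

theorem four_dvd_natCard {G : Type*} [Group G] {i : G} (hi : i ^ 2 ≠ 1)
    (hi' : (i ^ 2) ^ 2 = 1) : 4 ∣ Nat.card G :=
  orderOf_eq_four hi hi' ▸ orderOf_dvd_natCard i

variable {G : Type*} [CommGroup G]

theorem index_range_powMonoidHom_two [Finite G] {t : G} (ht : t ≠ 1)
    (htors : ∀ g : G, g ^ 2 = 1 ↔ g = 1 ∨ g = t) :
    (powMonoidHom 2 : G →* G).range.index = 2 := by
  have hker : ((powMonoidHom 2 : G →* G).ker : Set G) = {1, t} := by
    ext g
    simpa [MonoidHom.mem_ker] using htors g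
  rw [Subgroup.index_range, ← SetLike.coe_sort_coe, hker, Nat.card_coe_set_eq,
    Set.ncard_pair ht.symm]

theorem isSquare_iff_map_eq_one [Finite G] {t : G} (ht : t ≠ 1)
    (htors : ∀ g : G, g ^ 2 = 1 ↔ g = 1 ∨ g = t) {χ : G →* ℤˣ} (hχ : χ ≠ 1) (g : G) :
    IsSquare g ↔ χ g = 1 := by
  have hle : (powMonoidHom 2 : G →* G).range ≤ χ.ker := by
    rintro _ ⟨g, rfl⟩
    simp [MonoidHom.mem_ker, Int.units_sq]
  have hindex : χ.ker.index ≠ 1 := by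
    rwa [Ne, Subgroup.index_eq_one, MonoidHom.ker_eq_top_iff]
  have hrel : (powMonoidHom 2 : G →* G).range.relIndex χ.ker = 1 := by
    have hprime : ((powMonoidHom 2 : G →* G).range.relIndex χ.ker * χ.ker.index).Prime := by
      rw [Subgroup.relIndex_mul_index hle, index_range_powMonoidHom_two ht htors]
      exact Nat.prime_two
    exact ((Nat.prime_mul_iff.1 hprime).resolve_left fun h ↦ hindex h.2).2
  rw [← MonoidHom.mem_ker, hle.antisymm' (Subgroup.relIndex_eq_one.1 hrel)]
  simp [isSquare_iff_exists_sq, eq_comm]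

theorem ker_powMonoidHom_four {i : G} (htors : ∀ g : G, g ^ 2 = 1 ↔ g = 1 ∨ g = i ^ 2) :
    (powMonoidHom 4 : G →* G).ker = Subgroup.zpowers i := by
  have hi : i ^ 4 = 1 := by simpa [← pow_mul] using (htors (i ^ 2)).2 (.inr rfl)
  refine le_antisymm (fun g hg ↦ ?_) (by simpa [MonoidHom.mem_ker])
  have hg : (g ^ 2) ^ 2 = 1 := by simpa [MonoidHom.mem_ker, ← pow_mul] using hg
  rcases (htors _).1 hg with h | h
  · rcases (htors g).1 h with rfl | rfl
    exacts [one_mem _, pow_mem (Subgroup.mem_zpowers i) 2]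
  · have hdiv : (g / i) ^ 2 = 1 := by rw [div_pow, h, div_self']
    rcases (htors _).1 hdiv with h | h
    · simp [div_eq_one.1 h]
    · simp [div_eq_iff_eq_mul.1 h, ← pow_succ]

theorem eight_dvd_natCard_iff_isSquare [Finite G] {i : G} (hi : i ^ 2 ≠ 1)
    (htors : ∀ g : G, g ^ 2 = 1 ↔ g = 1 ∨ g = i ^ 2) : 8 ∣ Nat.card G ↔ IsSquare i := by
  have hi' : (i ^ 2) ^ 2 = 1 := (htors (i ^ 2)).2 (.inr rfl)
  constructor
  · intro h
    have hcard : Nat.card (powMonoidHom 4 : G →* G).range * 4 = Nat.card G := by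
      rw [← (powMonoidHom 4 : G →* G).ker.index_mul_card, Subgroup.index_ker,
        ker_powMonoidHom_four htors, Nat.card_zpowers, orderOf_eq_four hi hi']
    obtain ⟨⟨_, c, rfl⟩, hc⟩ := exists_prime_orderOf_dvd_card'
      (G := (powMonoidHom 4 : G →* G).range) 2 (by omega)
    have hc4 : c ^ 4 = i ^ 2 := by
      rw [orderOf_eq_prime_iff, Subtype.ext_iff, Ne, Subtype.ext_iff] at hc
      exact ((htors _).1 hc.1).resolve_left hc.2
    have hdiv : (i / c ^ 2) ^ 2 = 1 := by rw [div_pow, ← pow_mul, hc4, div_self']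
    rcases (htors _).1 hdiv with h | h
    · exact ⟨c, by rw [div_eq_one.1 h, sq]⟩
    · exact ⟨c ^ 3, by rw [div_eq_iff_eq_mul.1 h, ← hc4, ← pow_add, ← pow_add]⟩
  · rintro ⟨c, rfl⟩
    have horder : orderOf c = 2 ^ 3 := by
      refine orderOf_eq_prime_pow (n := 2) ?_ ?_
      · rwa [← sq, ← pow_mul] at hi
      · rwa [← sq, ← pow_mul, ← pow_mul] at hi'
    simpa [horder] using orderOf_dvd_natCard c

end TwoTorsion

section SpanIdeals

variable {R : Type*} [CommRing R]

theorem mem_of_isCoprime_of_mul_mem {I : Ideal R} {a b y : R} (hab : IsCoprime a b)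
    (ha : a * y ∈ I) (hb : b * y ∈ I) : y ∈ I := by
  obtain ⟨r, s, hrs⟩ := hab
  rw [← one_mul y, ← hrs, add_mul, mul_assoc, mul_assoc]
  exact add_mem (I.mul_mem_left r ha) (I.mul_mem_left s hb)

theorem left_mem_span_pair (a y : R) : a ∈ Ideal.span {a, y} := Ideal.subset_span (by simp)

theorem right_mem_span_pair (a y : R) : y ∈ Ideal.span {a, y} := Ideal.subset_span (by simp)

theorem span_pair_le_iff {a y : R} {I : Ideal R} : Ideal.span {a, y} ≤ I ↔ a ∈ I ∧ y ∈ I := by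
  simp [Ideal.span_le, Set.insert_subset_iff]

theorem span_pair_mul_span_pair_le_iff {a b y : R} {I : Ideal R} :
    Ideal.span {a, y} * Ideal.span {b, y} ≤ I ↔ a * b ∈ I ∧ a * y ∈ I ∧ b * y ∈ I ∧ y * y ∈ I := by
  simp [Ideal.span_pair_mul_span_pair, Ideal.span_le, Set.insert_subset_iff, mul_comm]

theorem span_pair_mul_span_pair_le (a b y : R) :
    Ideal.span {a, y} * Ideal.span {b, y} ≤ Ideal.span {a * b, y} :=
  span_pair_mul_span_pair_le_iff.2 ⟨left_mem_span_pair _ _,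
    Ideal.mul_mem_left _ _ (right_mem_span_pair _ _),
    Ideal.mul_mem_left _ _ (right_mem_span_pair _ _),
    Ideal.mul_mem_left _ _ (right_mem_span_pair _ _)⟩

theorem span_pair_mul_span_pair_of_isCoprime {a b : R} (hab : IsCoprime a b) (y : R) :
    Ideal.span {a, y} * Ideal.span {b, y} = Ideal.span {a * b, y} := by
  obtain ⟨hab_mem, hay, hby, -⟩ := span_pair_mul_span_pair_le_iff.1
    (le_refl (Ideal.span {a, y} * Ideal.span {b, y}))
  exact (span_pair_mul_span_pair_le a b y).antisymm
    (span_pair_le_iff.2 ⟨hab_mem, mem_of_isCoprime_of_mul_mem hab hay hby⟩)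

theorem span_pair_sq_of_isCoprime {a s y : R} (has : IsCoprime a s) (hy : a ^ 2 ∣ y * (s - y)) :
    Ideal.span {a, y} ^ 2 = Ideal.span {a ^ 2, y} := by
  obtain ⟨haa, hay, -, hyy⟩ := span_pair_mul_span_pair_le_iff.1
    (le_refl (Ideal.span {a, y} * Ideal.span {a, y}))
  obtain ⟨k, hk⟩ := hy
  have hsy : s * y = k * (a * a) + y * y := by linear_combination hk
  rw [sq, sq]
  refine (span_pair_mul_span_pair_le a a y).antisymm
    (span_pair_le_iff.2 ⟨haa, mem_of_isCoprime_of_mul_mem has hay ?_⟩)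
  exact hsy ▸ add_mem (Ideal.mul_mem_left _ k haa) hyy

theorem span_pair_sq_of_sq_eq_mul {a c y : R} (hac : IsCoprime a c) (hy : y ^ 2 = a * c) :
    Ideal.span {a, y} ^ 2 = Ideal.span {a} := by
  obtain ⟨haa, -, -, hyy⟩ := span_pair_mul_span_pair_le_iff.1
    (le_refl (Ideal.span {a, y} * Ideal.span {a, y}))
  have hy_dvd : a ∣ y * y := ⟨c, by rw [← sq, hy]⟩
  rw [sq]
  refine le_antisymm ?_ ((Ideal.span_singleton_le_iff_mem _).2
    (mem_of_isCoprime_of_mul_mem hac haa ?_))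
  · simpa only [span_pair_mul_span_pair_le_iff, Ideal.mem_span_singleton] using
      ⟨dvd_mul_right a a, dvd_mul_right a y, dvd_mul_right a y, hy_dvd⟩
  · rwa [mul_comm c, ← hy, sq]

theorem span_singleton_natAbs_cast (k : ℤ) :
    Ideal.span {(k.natAbs : R)} = Ideal.span {(k : R)} := by
  rcases k.natAbs_eq with h | h
  · rw [← Int.cast_natCast, ← h]
  · rw [h, Int.cast_neg, Ideal.span_singleton_neg, Int.natAbs_neg, Int.natAbs_natCast,
      Int.cast_natCast]

end SpanIdeals

section QuadraticForm

theorem exists_intCast_eq_mul_intCast_and_sq_le {n : ℕ} (hn : n ≠ 0) (w : ZMod n) :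
    ∃ x y : ℤ, (x, y) ≠ 0 ∧ (x : ZMod n) = w * y ∧ x ^ 2 ≤ n ∧ y ^ 2 ≤ n := by
  have : NeZero n := ⟨hn⟩
  obtain ⟨⟨a, b⟩, ⟨a', b'⟩, hne, heq⟩ := Fintype.exists_ne_map_eq_of_card_lt
    (fun z : Fin (n.sqrt + 1) × Fin (n.sqrt + 1) ↦ ((z.1 : ℕ) : ZMod n) - w * (z.2 : ℕ))
    (by simpa [ZMod.card] using Nat.lt_succ_sqrt n)
  have hsq (i j : Fin (n.sqrt + 1)) : ((i : ℤ) - j) ^ 2 ≤ n := by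
    have habs : |(i : ℤ) - j| ≤ n.sqrt := by rw [abs_le]; omega
    calc ((i : ℤ) - j) ^ 2 ≤ (n.sqrt : ℤ) ^ 2 := sq_le_sq' (abs_le.1 habs).1 (abs_le.1 habs).2
      _ ≤ n := mod_cast Nat.sqrt_le' n
  refine ⟨a - a', b - b', fun h ↦ hne ?_, ?_, hsq a a', hsq b b'⟩
  · simpa [sub_eq_zero, Fin.val_inj] using h
  · push_cast
    linear_combination heq

theorem exists_two_mul_sq_sub_sq_eq {p : ℕ} (hp : p.Prime) (hp2 : IsSquare (2 : ZMod p)) :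
    ∃ x y : ℤ, 2 * y ^ 2 - x ^ 2 = p := by
  obtain ⟨w, hw⟩ := hp2
  obtain ⟨x, y, hne, hxy, hx, hy⟩ := exists_intCast_eq_mul_intCast_and_sq_le hp.ne_zero w
  have hsq (z : ℤ) : z ^ 2 ≠ p := fun h ↦
    (Nat.prime_iff_prime_int.1 hp).not_isSquare ⟨z, by rw [← h, sq]⟩
  have hx := lt_of_le_of_ne hx (hsq x)
  have hy := lt_of_le_of_ne hy (hsq y)
  obtain ⟨k, hk⟩ : (p : ℤ) ∣ 2 * y ^ 2 - x ^ 2 := by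
    rw [← ZMod.intCast_zmod_eq_zero_iff_dvd]
    push_cast
    rw [hxy, hw]
    ring
  have hk0 : k ≠ 0 := by
    rintro rfl
    have := (Zsqrtd.norm_eq_zero (d := 2) (fun n h ↦
      Int.prime_two.not_isSquare ⟨n, h⟩) ⟨x, y⟩).1 (by simp [Zsqrtd.norm]; linarith)
    exact hne (by simpa [Zsqrtd.ext_iff] using this)
  have hp0 : (0 : ℤ) < p := mod_cast hp.pos
  have hlt : k < 2 := by nlinarith [hp0, sq_nonneg x]
  have hgt : -1 < k := by nlinarith [hp0, sq_nonneg y]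
  obtain rfl : k = 1 := by omega
  exact ⟨x, y, by simpa using hk⟩

theorem exists_sq_eq_two_mul_sq_add {p : ℕ} (hp : p.Prime) (hp2 : IsSquare (2 : ZMod p)) :
    ∃ (u : ℕ) (v : ℤ), (u : ℤ) ^ 2 = 2 * v ^ 2 + p := by
  obtain ⟨x, y, hxy⟩ := exists_two_mul_sq_sub_sq_eq hp hp2
  exact ⟨(x + 2 * y).natAbs, x + y, by rw [Int.natAbs_sq]; linear_combination hxy⟩

theorem isCoprime_of_sq_eq_two_mul_sq_add {m u v : ℤ} (hm : Squarefree m) (hodd : Odd m)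
    (huv : u ^ 2 = 2 * v ^ 2 + m) : IsCoprime u (2 * v) := by
  have hu : IsCoprime u 2 := by
    have hodd_sq : Odd (u ^ 2) := huv ▸ (even_two_mul (v ^ 2)).add_odd hodd
    obtain ⟨k, hk⟩ := (Int.odd_pow' two_ne_zero).1 hodd_sq
    exact ⟨1, -k, by rw [hk]; ring⟩
  have hv : IsCoprime u v := by
    rw [Int.isCoprime_iff_gcd_eq_one]
    have hdvd : (Int.gcd u v : ℤ) * Int.gcd u v ∣ m := by
      have hm_eq : m = u * u - 2 * (v * v) := by linear_combination -huv
      have hu_dvd := Int.gcd_dvd_left u v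
      have hv_dvd := Int.gcd_dvd_right u v
      exact hm_eq ▸ (mul_dvd_mul hu_dvd hu_dvd).sub ((mul_dvd_mul hv_dvd hv_dvd).mul_left 2)
    simpa using Int.isUnit_iff_natAbs_eq.1 (hm _ hdvd)
  exact hu.mul_right hv

theorem sq_emod_eight_eq_one_or_exists_eq_two_mul (z : ℤ) : z ^ 2 % 8 = 1 ∨ ∃ y, z = 2 * y := by
  rcases Int.even_or_odd z with hz | hz
  · exact .inr hz.exists_two_nsmul
  · have := Int.eight_dvd_sq_sub_one_of_odd hz
    omega

theorem sq_emod_sixteen_eq_one_iff (u : ℤ) : u ^ 2 % 16 = 1 ↔ u % 8 = 1 ∨ u % 8 = 7 := by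
  have hu_sq : u ^ 2 = 16 * (4 * (u / 8) ^ 2 + u / 8 * (u % 8)) + (u % 8) ^ 2 := by
    linear_combination (-u - 8 * (u / 8) - u % 8) * Int.mul_ediv_add_emod u 8
  rw [hu_sq, Int.mul_add_emod_self_left]
  have hnonneg := Int.emod_nonneg u (b := 8) (by decide)
  have hlt := Int.emod_lt_of_pos u (b := 8) (by decide)
  interval_cases u % 8 <;> decide

theorem emod_eight_iff_of_sq_eq_two_mul_sq_add {m u v : ℤ} (hm : m % 8 = 7)
    (huv : u ^ 2 = 2 * v ^ 2 + m) : u % 8 = 1 ∨ u % 8 = 7 ↔ m % 16 = 15 := by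
  have hu : u ^ 2 % 8 = 1 := (sq_emod_eight_eq_one_or_exists_eq_two_mul u).resolve_right (by
    rintro ⟨y, rfl⟩
    rw [mul_pow] at huv
    omega)
  have hv : v ^ 2 % 8 = 1 := (sq_emod_eight_eq_one_or_exists_eq_two_mul v).resolve_right (by
    rintro ⟨y, rfl⟩
    rw [mul_pow] at huv
    omega)
  rw [← sq_emod_sixteen_eq_one_iff]
  omega

end QuadraticForm

section AuxiliaryPrime

theorem exists_prime_mod_eight_eq_five_and_eq_neg_one {m : ℕ} (hm : m % 8 = 7) :
    ∃ q : ℕ, q.Prime ∧ q % 8 = 5 ∧ (q : ZMod m) = -1 := by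
  have hcop : (2 * m - 1).Coprime (8 * m) := by
    refine Nat.Coprime.mul_right ?_ ?_
    · exact Nat.Coprime.pow_right 3 (Nat.coprime_two_right.2 (Nat.odd_iff.2 (by omega)))
    · exact Nat.isCoprime_iff_coprime.1 ⟨-1, 2, by omega⟩
  obtain ⟨q, -, hq, hqm⟩ := Nat.forall_exists_prime_gt_and_modEq 0 (by omega) hcop
  have hq8 : q % 8 = (2 * m - 1) % 8 := hqm.of_mul_right m
  refine ⟨q, hq, by omega, ?_⟩
  rw [(ZMod.natCast_eq_natCast_iff _ _ _).2 (hqm.of_mul_left 8), Nat.cast_sub (by omega)]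
  simp

theorem legendreSym_neg_two_mul_eq_one {p q : ℕ} [Fact p.Prime] [Fact q.Prime]
    (hp : p % 4 = 3) (hq : q % 8 = 5) (hqp : (q : ZMod p) = -1) :
    legendreSym q (-2 * p) = 1 := by
  have hneg : legendreSym p q = -1 := by
    rw [legendreSym, Int.cast_natCast, hqp]
    have := legendreSym.at_neg_one (p := p) (by omega)
    rw [legendreSym, ZMod.χ₄_nat_three_mod_four hp] at this
    simpa using this
  rw [legendreSym.mul, legendreSym.at_neg_two (by omega),
    ← legendreSym.quadratic_reciprocity_one_mod_four (by omega) (by omega), hneg,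
    ZMod.χ₈'_nat_eq_if_mod_eight]
  grind

theorem exists_prime_mod_eight_eq_five_and_dvd_sq_add {p : ℕ} (hp : p.Prime) (hmod : p % 8 = 7) :
    ∃ q : ℕ, q % 8 = 5 ∧ ∃ x : ℤ, (q : ℤ) ∣ x ^ 2 + 2 * p := by
  obtain ⟨q, hq, hq8, hqp⟩ := exists_prime_mod_eight_eq_five_and_eq_neg_one hmod
  have : Fact p.Prime := ⟨hp⟩
  have : Fact q.Prime := ⟨hq⟩
  have hleg := legendreSym_neg_two_mul_eq_one (by omega) hq8 hqp
  have hne : ((-2 * p : ℤ) : ZMod q) ≠ 0 := fun h ↦ by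
    rw [(legendreSym.eq_zero_iff q _).2 h] at hleg
    exact zero_ne_one hleg
  obtain ⟨w, hw⟩ := (legendreSym.eq_one_iff q hne).1 hleg
  obtain ⟨x, rfl⟩ := ZMod.intCast_surjective w
  refine ⟨q, hq8, x, (ZMod.intCast_zmod_eq_zero_iff_dvd _ _).1 ?_⟩
  push_cast at hw ⊢
  linear_combination -hw

end AuxiliaryPrime

section ClassGroup

open scoped nonZeroDivisors

variable {R : Type*} [CommRing R] [IsDedekindDomain R]

theorem mk0_sq_eq_one_iff {I : (Ideal R)⁰} :
    ClassGroup.mk0 I ^ 2 = 1 ↔ ((I : Ideal R) ^ 2).IsPrincipal := by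
  rw [← map_pow, ← SubmonoidClass.coe_pow]
  exact ClassGroup.mk0_eq_one_iff _

theorem exists_mk0_eq_and_sq_eq_span_singleton {I : (Ideal R)⁰} {y z k : R} (hy : y ≠ 0)
    (hI : (I : Ideal R) ^ 2 = Ideal.span {z}) (hyz : y ^ 2 = z * k) :
    ∃ J : (Ideal R)⁰, ClassGroup.mk0 J = ClassGroup.mk0 I ∧ (J : Ideal R) ^ 2 = Ideal.span {k} := by
  have hsq : Ideal.span {y} ^ 2 = (I : Ideal R) ^ 2 * Ideal.span {k} := by
    rw [hI, Ideal.span_singleton_pow, hyz, Ideal.span_singleton_mul_span_singleton]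
  obtain ⟨J, hJ⟩ : (I : Ideal R) ∣ Ideal.span {y} :=
    (UniqueFactorizationMonoid.pow_dvd_pow_iff_dvd two_ne_zero).1 (Dvd.intro _ hsq.symm)
  have hJ0 : J ∈ (Ideal R)⁰ := by
    rw [mem_nonZeroDivisors_iff_ne_zero]
    rintro rfl
    simp [hy] at hJ
  have hII : ClassGroup.mk0 I * ClassGroup.mk0 I = 1 := by
    rw [← sq, mk0_sq_eq_one_iff]
    exact ⟨z, hI⟩
  have hIJ : ClassGroup.mk0 I * ClassGroup.mk0 ⟨J, hJ0⟩ = 1 := by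
    rw [← map_mul, ClassGroup.mk0_eq_one_iff]
    exact ⟨y, hJ.symm⟩
  refine ⟨⟨J, hJ0⟩, mul_left_cancel (hIJ.trans hII.symm), ?_⟩
  rw [hJ, mul_pow] at hsq
  exact mul_left_cancel₀ (pow_ne_zero 2 (nonZeroDivisors.ne_zero I.2)) hsq

variable {M : Type*} [CommMonoid M]

theorem map_eq_of_mk0_eq_mk0 {φ : (Ideal R)⁰ →* M}
    (hφ : ∀ I : (Ideal R)⁰, (I : Ideal R).IsPrincipal → φ I = 1) {I J : (Ideal R)⁰}
    (hIJ : ClassGroup.mk0 I = ClassGroup.mk0 J) : φ I = φ J := by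
  obtain ⟨x, y, hx, hy, h⟩ := ClassGroup.mk0_eq_mk0_iff.1 hIJ
  have hspan {z : R} (hz : z ≠ 0) : Ideal.span {z} ∈ (Ideal R)⁰ := by
    simpa [mem_nonZeroDivisors_iff_ne_zero]
  have hone {z : R} (hz : z ≠ 0) : φ ⟨_, hspan hz⟩ = 1 := hφ _ ⟨z, by simp⟩
  have hmul : (⟨_, hspan hx⟩ : (Ideal R)⁰) * I = ⟨_, hspan hy⟩ * J := Subtype.ext h
  simpa only [map_mul, hone hx, hone hy, one_mul] using congrArg φ hmul

/-- The homomorphism out of the class group induced by a homomorphism on nonzero ideals that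
is trivial on principal ideals. -/
noncomputable def classGroupLift (φ : (Ideal R)⁰ →* M)
    (hφ : ∀ I : (Ideal R)⁰, (I : Ideal R).IsPrincipal → φ I = 1) : ClassGroup R →* M :=
  ((Con.ker ClassGroup.mk0).lift φ (Con.le_def.2 fun h ↦ map_eq_of_mk0_eq_mk0 hφ h)).comp
    (Con.quotientKerEquivOfSurjective _ ClassGroup.mk0_surjective).symm.toMonoidHom

theorem classGroupLift_mk0 {φ : (Ideal R)⁰ →* M}
    (hφ : ∀ I : (Ideal R)⁰, (I : Ideal R).IsPrincipal → φ I = 1) (I : (Ideal R)⁰) :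
    classGroupLift φ hφ (ClassGroup.mk0 I) = φ I := by
  have hsymm : (Con.quotientKerEquivOfSurjective ClassGroup.mk0 ClassGroup.mk0_surjective).symm
      (ClassGroup.mk0 I) = (Con.ker ClassGroup.mk0).mk' I := by
    rw [MulEquiv.symm_apply_eq]
    rfl
  rw [classGroupLift, MonoidHom.comp_apply, MulEquiv.coe_toMonoidHom, hsymm, Con.lift_mk']

end ClassGroup

/-- The quadratic character `χ₈` of conductor `8`, extended to even numbers by evaluating it at the
odd part, so that its value at a nonzero number is always a sign. -/
def oddPartχ₈ : ℕ →* ℤ where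
  toFun n := ZMod.χ₈ (ordCompl[2] n : ℕ)
  map_one' := by simp
  map_mul' m n := by rw [Nat.ordCompl_mul, Nat.cast_mul, map_mul]

theorem oddPartχ₈_apply (n : ℕ) : oddPartχ₈ n = ZMod.χ₈ (ordCompl[2] n : ℕ) := rfl

theorem oddPartχ₈_of_odd {n : ℕ} (hn : Odd n) : oddPartχ₈ n = ZMod.χ₈ n := by
  rw [oddPartχ₈_apply,
    (Nat.ordCompl_eq_self_iff_zero_or_not_dvd n Nat.prime_two).2 (.inr hn.not_two_dvd_nat)]

theorem oddPartχ₈_eq_one_iff {n : ℕ} (hn : Odd n) : oddPartχ₈ n = 1 ↔ n % 8 = 1 ∨ n % 8 = 7 := by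
  rw [oddPartχ₈_of_odd hn, ZMod.χ₈_nat_eq_if_mod_eight, if_neg (by grind)]
  grind

theorem oddPartχ₈_two_mul (n : ℕ) : oddPartχ₈ (2 * n) = oddPartχ₈ n := by
  simpa [oddPartχ₈_apply] using
    congrArg (fun k : ℕ ↦ ZMod.χ₈ k) (Nat.ordCompl_self_pow_mul n 1 Nat.prime_two)

theorem oddPartχ₈_eq_one_of_eq_sq_add {m : ℤ} (hm : m % 8 = 7) {n : ℕ} (hn : n ≠ 0) {a b : ℤ}
    (hab : (n : ℤ) = a ^ 2 + 2 * m * b ^ 2) : oddPartχ₈ n = 1 := by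
  induction n using Nat.strong_induction_on generalizing a b with
  | _ n ih =>
  obtain ⟨k, rfl⟩ : ∃ k, m = 8 * k + 7 := ⟨m / 8, by omega⟩
  rcases sq_emod_eight_eq_one_or_exists_eq_two_mul a with ha | ⟨a, rfl⟩
  · have hn8 : n % 8 = 1 ∨ n % 8 = 7 := by
      rcases sq_emod_eight_eq_one_or_exists_eq_two_mul b with hb | ⟨b, rfl⟩ <;>
        ring_nf at hab <;> omega
    exact (oddPartχ₈_eq_one_iff (Nat.odd_iff.2 (by omega))).2 hn8
  rcases sq_emod_eight_eq_one_or_exists_eq_two_mul b with hb | ⟨b, rfl⟩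
  · obtain ⟨l, rfl⟩ : ∃ l, n = 2 * l := ⟨n / 2, by ring_nf at hab; omega⟩
    have hl8 : l % 8 = 1 ∨ l % 8 = 7 := by
      rcases sq_emod_eight_eq_one_or_exists_eq_two_mul a with ha | ⟨a, rfl⟩ <;>
        push_cast at hab <;> ring_nf at hab <;> omega
    rw [oddPartχ₈_two_mul]
    exact (oddPartχ₈_eq_one_iff (Nat.odd_iff.2 (by omega))).2 hl8
  · obtain ⟨l, rfl⟩ : ∃ l, n = 2 * (2 * l) := ⟨n / 4, by ring_nf at hab; omega⟩
    rw [oddPartχ₈_two_mul, oddPartχ₈_two_mul]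
    exact ih l (by omega) (by omega) (a := a) (b := b) (by push_cast at hab; linarith)

section RingOfIntegers

variable (R F : Type*) [CommRing R] [IsDomain R] [Field F] [NumberField F] [Algebra R F]

theorem finite_classGroup_of_isIntegralClosure_int [IsIntegralClosure R ℤ F] :
    Finite (ClassGroup R) :=
  .of_equiv _ (ClassGroup.mulEquiv (RingOfIntegers.equiv (K := F) R)).toEquiv

theorem classNumber_eq_natCard_classGroup [IsIntegralClosure R ℤ F] :
    classNumber F = Nat.card (ClassGroup R) := by
  rw [classNumber, ← Nat.card_eq_fintype_card]
  exact Nat.card_congr (ClassGroup.mulEquiv (RingOfIntegers.equiv R)).toEquiv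

end RingOfIntegers

open QuadraticAlgebra in
/-- The presentation `K[X] / (X ^ 2 + a)` of `K[√-a]`, sending the root of `X ^ 2 + a` to `√-a`. -/
noncomputable def adjoinRootEquivQuadraticAlgebra {K : Type*} [Field K] (a : K) :
    AdjoinRoot (X ^ 2 + C a) ≃ₐ[K] QuadraticAlgebra K (-a) 0 :=
  AlgEquiv.ofAlgHom
    (AdjoinRoot.liftAlgHom _ (Algebra.ofId K _) ω (by ext <;> simp [pow_two]))
    (QuadraticAlgebra.lift ⟨AdjoinRoot.root _, by
      have hroot := AdjoinRoot.eval₂_root (X ^ 2 + C a)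
      simp only [eval₂_add, eval₂_pow, eval₂_X, eval₂_C] at hroot
      rw [zero_smul, add_zero, Algebra.smul_def, mul_one, map_neg, AdjoinRoot.algebraMap_eq]
      linear_combination hroot⟩)
    (by ext <;> simp)
    (by ext; simp)

/-- The order `ℤ[√d]`; the element `a + b√d` has coordinates `⟨a, b⟩`. -/
abbrev SqrtOrder (d : ℤ) := QuadraticAlgebra ℤ d 0

namespace SqrtOrder

open QuadraticAlgebra nonZeroDivisors

variable {d : ℤ}

theorem norm_eq (z : SqrtOrder d) : QuadraticAlgebra.norm z = z.re ^ 2 - d * z.im ^ 2 := by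
  rw [QuadraticAlgebra.norm_def]
  ring

theorem intCast_dvd_iff {n : ℤ} {z : SqrtOrder d} :
    (n : SqrtOrder d) ∣ z ↔ n ∣ z.re ∧ n ∣ z.im := by
  rw [← QuadraticAlgebra.algebraMap_dvd_iff, eq_intCast]

theorem absNorm_span_singleton [IsDedekindDomain (SqrtOrder d)] (z : SqrtOrder d) :
    Ideal.absNorm (Ideal.span {z}) = (QuadraticAlgebra.norm z).natAbs := by
  rw [Ideal.absNorm_span_singleton, Algebra.norm_apply, ← QuadraticAlgebra.det_toLinearMap_eq_norm]
  rfl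

/-- The ideal `(n, x + √d)`. When `n ∣ x ^ 2 - d` it has norm `n`. -/
def pairIdeal (d : ℤ) (n : ℕ) (x : ℤ) : Ideal (SqrtOrder d) :=
  Ideal.span {(n : SqrtOrder d), ⟨x, 1⟩}

/-- Reduction modulo `n` along the square root `-x` of `d`. -/
def reduction {n : ℕ} {x : ℤ} (hx : (n : ℤ) ∣ x ^ 2 - d) : SqrtOrder d →ₐ[ℤ] ZMod n :=
  QuadraticAlgebra.lift ⟨-x, by
    have hx' := (ZMod.intCast_zmod_eq_zero_iff_dvd _ _).2 hx
    push_cast at hx'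
    simp only [zsmul_eq_mul, mul_one, zero_mul, add_zero, Int.cast_zero]
    linear_combination hx'⟩

theorem reduction_apply {n : ℕ} {x : ℤ} (hx : (n : ℤ) ∣ x ^ 2 - d) (z : SqrtOrder d) :
    reduction hx z = (z.re - z.im * x : ℤ) := by
  change z.re • 1 + z.im • (-x : ZMod n) = _
  push_cast
  simp only [zsmul_eq_mul]
  ring

theorem ker_reduction {n : ℕ} {x : ℤ} (hx : (n : ℤ) ∣ x ^ 2 - d) :
    RingHom.ker (reduction hx).toRingHom = pairIdeal d n x := by
  apply le_antisymm
  · intro z hz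
    obtain ⟨k, hk⟩ : (n : ℤ) ∣ z.re - z.im * x := by
      rw [← ZMod.intCast_zmod_eq_zero_iff_dvd, ← reduction_apply hx]
      exact hz
    refine Ideal.mem_span_pair.2 ⟨k, z.im, ?_⟩
    ext
    · simp only [re_add, re_mul, re_intCast, im_intCast, re_natCast, im_natCast, Int.cast_id]
      linear_combination -hk
    · simp
  · rw [pairIdeal, Ideal.span_le]
    simp [Set.insert_subset_iff, RingHom.mem_ker, reduction_apply]

theorem absNorm_pairIdeal [IsDedekindDomain (SqrtOrder d)] {n : ℕ} {x : ℤ}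
    (hx : (n : ℤ) ∣ x ^ 2 - d) : Ideal.absNorm (pairIdeal d n x) = n := by
  have hsurj : Function.Surjective (reduction hx).toRingHom := fun y ↦ by
    obtain ⟨y, rfl⟩ := ZMod.intCast_surjective y
    exact ⟨y, by simp⟩
  rw [← ker_reduction hx, Ideal.absNorm_apply, Submodule.cardQuot_apply,
    Nat.card_congr (RingHom.quotientKerEquivOfSurjective hsurj).toEquiv, Nat.card_zmod]

theorem mk_mul_star_mk (x y : ℤ) :
    (⟨x, y⟩ : SqrtOrder d) * ⟨x, -y⟩ = ((x ^ 2 - d * y ^ 2 : ℤ) : SqrtOrder d) := by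
  ext <;> simp only [re_mul, im_mul, re_intCast, im_intCast, Int.cast_id] <;> ring

theorem pairIdeal_mul_pairIdeal {a b : ℕ} (hab : a.Coprime b) (x : ℤ) :
    pairIdeal d a x * pairIdeal d b x = pairIdeal d (a * b) x := by
  rw [pairIdeal, pairIdeal, pairIdeal, Nat.cast_mul,
    span_pair_mul_span_pair_of_isCoprime hab.cast]

theorem pairIdeal_sq {u : ℕ} {x : ℤ} (hux : IsCoprime (u : ℤ) (2 * x))
    (hu : (u : ℤ) ^ 2 ∣ x ^ 2 - d) : pairIdeal d u x ^ 2 = pairIdeal d (u ^ 2) x := by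
  rw [pairIdeal, pairIdeal, Nat.cast_pow]
  refine span_pair_sq_of_isCoprime (s := ((2 * x : ℤ) : SqrtOrder d)) ?_ ?_
  · simpa using hux.map (Int.castRingHom (SqrtOrder d))
  · have hstar : ((2 * x : ℤ) : SqrtOrder d) - ⟨x, 1⟩ = ⟨x, -1⟩ := by
      ext
      · simp only [re_sub, re_intCast, Int.cast_id]
        ring
      · simp
    rw [hstar, mk_mul_star_mk]
    exact_mod_cast (Int.cast_dvd_cast (α := SqrtOrder d) _ _ (by simpa using hu))

theorem pairIdeal_zero_sq {a : ℕ} {c : ℤ} (hac : IsCoprime (a : ℤ) c) (hd : d = a * c) :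
    pairIdeal d a 0 ^ 2 = Ideal.span {(a : SqrtOrder d)} := by
  refine span_pair_sq_of_sq_eq_mul (c := (c : SqrtOrder d)) ?_ ?_
  · simpa using hac.map (Int.castRingHom (SqrtOrder d))
  · ext <;> simp [sq, hd]

theorem pairIdeal_eq_span_singleton {n : ℕ} {x : ℤ} (h : x ^ 2 - d ∣ n) :
    pairIdeal d n x = Ideal.span {⟨x, 1⟩} := by
  refine Ideal.span_pair_eq_span_right_iff_dvd.2 ((Dvd.intro ⟨x, -1⟩ rfl).trans ?_)
  rw [mk_mul_star_mk]
  exact_mod_cast (Int.cast_dvd_cast (α := SqrtOrder d) _ _ (by simpa using h))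

theorem pairIdeal_add_mul (n : ℕ) (x k : ℤ) : pairIdeal d n (x + k * n) = pairIdeal d n x := by
  have hmk : (⟨x + k * n, 1⟩ : SqrtOrder d) = ⟨x, 1⟩ + k * n := by
    ext <;> simp
  rw [pairIdeal, hmk, Ideal.span_pair_add_mul_left, pairIdeal]

section PairClass

variable [IsDedekindDomain (SqrtOrder d)]

theorem pairIdeal_mem_nonZeroDivisors (n : ℕ) (x : ℤ) :
    pairIdeal d n x ∈ (Ideal (SqrtOrder d))⁰ := by
  rw [mem_nonZeroDivisors_iff_ne_zero]
  intro h
  have hmem : (⟨x, 1⟩ : SqrtOrder d) ∈ pairIdeal d n x := right_mem_span_pair _ _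
  rw [h, Ideal.zero_eq_bot, Ideal.mem_bot] at hmem
  simpa using congrArg QuadraticAlgebra.im hmem

/-- The class of the ideal `(n, x + √d)`. -/
noncomputable def pairClass (d : ℤ) [IsDedekindDomain (SqrtOrder d)] (n : ℕ) (x : ℤ) :
    ClassGroup (SqrtOrder d) :=
  ClassGroup.mk0 ⟨pairIdeal d n x, pairIdeal_mem_nonZeroDivisors n x⟩

theorem pairClass_mul_pairClass {a b : ℕ} (hab : a.Coprime b) (x : ℤ) :
    pairClass d a x * pairClass d b x = pairClass d (a * b) x := by
  simp only [pairClass, ← map_mul, Submonoid.mk_mul_mk, pairIdeal_mul_pairIdeal hab]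

theorem pairClass_eq_one {n : ℕ} {x : ℤ} (h : x ^ 2 - d ∣ n) : pairClass d n x = 1 := by
  rw [pairClass, ClassGroup.mk0_eq_one_iff]
  exact ⟨⟨x, 1⟩, pairIdeal_eq_span_singleton h⟩

theorem pairClass_sq_mul_pairClass {u w : ℕ} {x : ℤ} (hux : IsCoprime (u : ℤ) (2 * x))
    (huw : u.Coprime w) (h : x ^ 2 - d = u ^ 2 * w) :
    pairClass d u x ^ 2 * pairClass d w x = 1 := by
  have hsq : pairClass d u x ^ 2 = pairClass d (u ^ 2) x := by
    simp only [pairClass, ← map_pow, SubmonoidClass.mk_pow,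
      pairIdeal_sq hux (h ▸ dvd_mul_right _ _)]
  rw [hsq, pairClass_mul_pairClass (huw.pow_left 2), pairClass_eq_one (by simp [h])]

theorem pairClass_zero_sq {a : ℕ} {c : ℤ} (hac : IsCoprime (a : ℤ) c) (hd : d = a * c) :
    pairClass d a 0 ^ 2 = 1 := by
  rw [pairClass, ← map_pow, ClassGroup.mk0_eq_one_iff]
  exact ⟨_, pairIdeal_zero_sq hac hd⟩

theorem pairClass_one (x : ℤ) : pairClass d 1 x = 1 := by
  simpa using pairClass_mul_pairClass (d := d) (Nat.coprime_one_left 1) x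

theorem pairClass_add_mul (n : ℕ) (x k : ℤ) :
    pairClass d n (x + k * n) = pairClass d n x :=
  congrArg ClassGroup.mk0 (Subtype.ext (pairIdeal_add_mul n x k))

end PairClass

theorem add_intCast_sq {z : SqrtOrder d} {n : ℤ} (hz : QuadraticAlgebra.norm z = n ^ 2) :
    (z + n) ^ 2 = z * (2 * (z.re + n) : ℤ) := by
  rw [norm_eq] at hz
  rw [sq]
  ext
  · simp only [re_mul, re_add, im_add, re_intCast, im_intCast, Int.cast_id]
    linear_combination -hz
  · simp only [im_mul, re_add, im_add, re_intCast, im_intCast, Int.cast_id]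
    ring

theorem natCast_dvd_of_dvd_sq {q : ℕ} (hq : q.Prime) (hq2 : ¬ q ∣ 2) (hqd : ¬ (q : ℤ) ∣ d)
    {z : SqrtOrder d} (hz : (q : SqrtOrder d) ∣ z ^ 2) : (q : SqrtOrder d) ∣ z := by
  have hsq_re : (z ^ 2).re = z.re ^ 2 + d * z.im ^ 2 := by
    rw [sq, re_mul]
    ring
  have hsq_im : (z ^ 2).im = 2 * (z.re * z.im) := by
    rw [sq, im_mul]
    ring
  rw [← Int.cast_natCast, intCast_dvd_iff] at hz ⊢
  rw [hsq_re, hsq_im] at hz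
  obtain ⟨hre, him⟩ := hz
  have hq := Nat.prime_iff_prime_int.1 hq
  have hq2 : ¬ (q : ℤ) ∣ 2 := mod_cast hq2
  rcases hq.dvd_or_dvd ((hq.dvd_or_dvd him).resolve_left hq2) with h | h
  · have := (Int.dvd_add_right (dvd_pow h two_ne_zero)).1 hre
    exact ⟨h, hq.dvd_of_dvd_pow ((hq.dvd_or_dvd this).resolve_left hqd)⟩
  · exact ⟨hq.dvd_of_dvd_pow ((Int.dvd_add_left ((dvd_pow h two_ne_zero).mul_left d)).1 hre), h⟩

theorem dvd_of_sq_eq_span {J : Ideal (SqrtOrder d)} {a : ℕ} (hd2 : 2 ∣ d) (ha : Squarefree a)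
    (hJ : J ^ 2 = Ideal.span {(a : SqrtOrder d)}) : (a : ℤ) ∣ d := by
  have hprime : ∀ q ∈ a.primeFactors, q ∣ d.natAbs := by
    intro q hq
    have hq' := Nat.prime_of_mem_primeFactors hq
    by_contra hqd
    rw [← Int.natCast_dvd] at hqd
    have hq2 : ¬ q ∣ 2 := fun h ↦ hqd ((Int.natCast_dvd_natCast.2 h).trans hd2)
    have hle : J ≤ Ideal.span {(q : SqrtOrder d)} := by
      intro z hz
      rw [Ideal.mem_span_singleton]
      refine natCast_dvd_of_dvd_sq hq' hq2 hqd ?_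
      have hz2 : z ^ 2 ∈ J ^ 2 := Ideal.pow_mem_pow hz 2
      rw [hJ, Ideal.mem_span_singleton] at hz2
      exact (Nat.cast_dvd_cast (Nat.dvd_of_mem_primeFactors hq)).trans hz2
    have hqa : ((q ^ 2 : ℕ) : ℤ) ∣ a := by
      have := Ideal.pow_right_mono hle 2
      rw [hJ, Ideal.span_singleton_pow, Ideal.span_singleton_le_span_singleton] at this
      have : (((q ^ 2 : ℕ) : ℤ) : SqrtOrder d) ∣ ((a : ℤ) : SqrtOrder d) := by exact_mod_cast this
      simpa using (intCast_dvd_iff.1 this).1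
    rw [Int.natCast_dvd_natCast, sq] at hqa
    exact hq'.not_isUnit (ha q hqa)
  rw [Int.natCast_dvd, ← Nat.prod_primeFactors_of_squarefree ha]
  exact Finset.prod_primes_dvd _ (fun q hq ↦ (Nat.prime_of_mem_primeFactors hq).prime) hprime

section TwoTorsion

variable [IsDedekindDomain (SqrtOrder d)]

theorem exists_sq_eq_span_intCast (hd : d < 0) {c : ClassGroup (SqrtOrder d)} (hc : c ^ 2 = 1) :
    ∃ (J : (Ideal (SqrtOrder d))⁰) (k : ℤ), ClassGroup.mk0 J = c ∧
      (J : Ideal (SqrtOrder d)) ^ 2 = Ideal.span {(k : SqrtOrder d)} := by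
  obtain ⟨I, rfl⟩ := ClassGroup.mk0_surjective c
  obtain ⟨z, hz : (I : Ideal (SqrtOrder d)) ^ 2 = Ideal.span {z}⟩ :=
    mk0_sq_eq_one_iff.1 hc
  have hnonneg : 0 ≤ QuadraticAlgebra.norm z := by
    rw [norm_eq]
    nlinarith [sq_nonneg z.re, sq_nonneg z.im]
  obtain ⟨n, hn⟩ : ∃ n : ℤ, QuadraticAlgebra.norm z = n ^ 2 := by
    refine ⟨Ideal.absNorm (I : Ideal (SqrtOrder d)), ?_⟩
    rw [← Nat.cast_pow, ← map_pow, hz, absNorm_span_singleton, Int.natAbs_of_nonneg hnonneg]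
  by_cases hzn : z + n = 0
  · refine ⟨I, -n, rfl, ?_⟩
    rw [hz, eq_neg_of_add_eq_zero_left hzn, Int.cast_neg]
  · obtain ⟨J, hJ, hJ_sq⟩ := exists_mk0_eq_and_sq_eq_span_singleton hzn hz (add_intCast_sq hn)
    exact ⟨J, _, hJ, hJ_sq⟩

theorem exists_squarefree_sq_eq_span_natCast (hd : d < 0) {c : ClassGroup (SqrtOrder d)}
    (hc : c ^ 2 = 1) :
    ∃ (J : (Ideal (SqrtOrder d))⁰) (a : ℕ), ClassGroup.mk0 J = c ∧ Squarefree a ∧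
      (J : Ideal (SqrtOrder d)) ^ 2 = Ideal.span {(a : SqrtOrder d)} := by
  obtain ⟨I, k, rfl, hI⟩ := exists_sq_eq_span_intCast hd hc
  obtain ⟨a, b, hab, ha⟩ := Nat.sq_mul_squarefree k.natAbs
  have hI' : (I : Ideal (SqrtOrder d)) ^ 2 = Ideal.span {(b ^ 2 * a : SqrtOrder d)} := by
    rw [hI, ← span_singleton_natAbs_cast, ← hab]
    push_cast
    rfl
  have hba : (b * a : SqrtOrder d) ≠ 0 := by
    intro h
    refine pow_ne_zero 2 (nonZeroDivisors.ne_zero I.2) ?_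
    rw [hI', sq, mul_assoc, h, mul_zero, Ideal.span_singleton_eq_bot.2 rfl, Ideal.zero_eq_bot]
  obtain ⟨J, hJI, hJ⟩ := exists_mk0_eq_and_sq_eq_span_singleton hba hI'
    (k := (a : SqrtOrder d)) (by ring)
  exact ⟨J, a, hJI, ha, hJ⟩

theorem exists_eq_pairClass_of_sq_eq_one (hd : d < 0) (hd2 : 2 ∣ d) (hsq : Squarefree d)
    {c : ClassGroup (SqrtOrder d)} (hc : c ^ 2 = 1) :
    ∃ a : ℕ, (a : ℤ) ∣ d ∧ c = pairClass d a 0 := by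
  obtain ⟨J, a, rfl, ha, hJ⟩ := exists_squarefree_sq_eq_span_natCast hd hc
  obtain ⟨e, he⟩ := dvd_of_sq_eq_span hd2 ha hJ
  have hae : IsCoprime (a : ℤ) e := (IsRelPrime.of_squarefree_mul (he ▸ hsq)).isCoprime
  have hsq_eq : pairIdeal d a 0 ^ 2 = (J : Ideal (SqrtOrder d)) ^ 2 := by
    rw [hJ, pairIdeal_zero_sq hae he]
  exact ⟨a, ⟨e, he⟩, congrArg _ (Subtype.ext (pow_left_injective two_ne_zero hsq_eq.symm))⟩

end TwoTorsion

/-- The character `oddPartχ₈` of the norm of an ideal of `ℤ[√d]`. -/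
noncomputable def idealGenusChar (d : ℤ) [IsDedekindDomain (SqrtOrder d)] :
    (Ideal (SqrtOrder d))⁰ →* ℤ where
  toFun I := oddPartχ₈ (Ideal.absNorm (I : Ideal (SqrtOrder d)))
  map_one' := by simp
  map_mul' I J := by simp

theorem idealGenusChar_apply [IsDedekindDomain (SqrtOrder d)]
    (I : (Ideal (SqrtOrder d))⁰) :
    idealGenusChar d I = oddPartχ₈ (Ideal.absNorm (I : Ideal (SqrtOrder d))) := rfl

section IntegralClosure

theorem exists_intCast_eq_of_mul_sq_eq_intCast (hd : Squarefree d) {k : ℚ} {n : ℤ}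
    (h : d * k ^ 2 = n) : ∃ k' : ℤ, k = k' := by
  have hd0 : (d : ℚ) ≠ 0 := mod_cast hd.ne_zero
  have hsq : (d * k) ^ 2 = ((d * n : ℤ) : ℚ) := by
    push_cast
    rw [← h]
    ring
  have hint : IsIntegral ℤ (d * k) :=
    .of_pow two_pos (hsq ▸ isIntegral_algebraMap (R := ℤ) (x := d * n))
  obtain ⟨w, hw : (w : ℚ) = d * k⟩ := IsIntegrallyClosed.isIntegral_iff.1 hint
  have hdvd : d ∣ w ^ 2 := ⟨n, by rw [← hw] at hsq; exact_mod_cast hsq⟩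
  obtain ⟨k', rfl⟩ := (hd.dvd_pow_iff_dvd two_ne_zero).1 hdvd
  refine ⟨k', mul_left_cancel₀ hd0 ?_⟩
  rw [← hw]
  push_cast
  rfl

theorem even_and_even_of_four_dvd_sq_sub_mul_sq {m k : ℤ} (hd : Squarefree d) (hd4 : d % 4 ≠ 1)
    (h : 4 ∣ m ^ 2 - d * k ^ 2) : Even m ∧ Even k := by
  have hd4' : d % 4 ≠ 0 := fun h0 ↦ by
    have := Int.isUnit_iff.1 (hd 2 (by omega))
    omega
  rcases Int.even_or_odd' m with ⟨m, rfl | rfl⟩ <;> rcases Int.even_or_odd' k with ⟨k, rfl | rfl⟩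
  · exact ⟨even_two_mul m, even_two_mul k⟩
  all_goals
    ring_nf at h
    omega

/-- The inclusion `ℤ[√d] → ℚ[√d]`. -/
def toRat (d : ℤ) : SqrtOrder d →ₐ[ℤ] QuadraticAlgebra ℚ d 0 :=
  QuadraticAlgebra.lift ⟨ω, by ext <;> simp⟩

theorem toRat_apply (z : SqrtOrder d) : toRat d z = ⟨z.re, z.im⟩ := by
  change z.re • (1 : QuadraticAlgebra ℚ d 0) + z.im • ω = _
  ext <;> simp

theorem toRat_injective : Function.Injective (toRat d) := fun z w h ↦ by
  rw [toRat_apply, toRat_apply, QuadraticAlgebra.mk.injEq] at h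
  exact QuadraticAlgebra.ext (mod_cast h.1) (mod_cast h.2)

theorem exists_trace_norm_eq_intCast {z : QuadraticAlgebra ℚ d 0} (hz : IsIntegral ℤ z) :
    ∃ m n : ℤ, trace z = m ∧ QuadraticAlgebra.norm z = n := by
  have hstar : IsIntegral ℤ (star z) := hz.map (starRingEnd (QuadraticAlgebra ℚ d 0)).toIntAlgHom
  have hinj : Function.Injective (algebraMap ℚ (QuadraticAlgebra ℚ d 0)) :=
    QuadraticAlgebra.algebraMap_injective
  have htrace : IsIntegral ℤ (trace z) := by
    rw [← isIntegral_algebraMap_iff hinj, algebraMap_trace_eq_add_star]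
    exact hz.add hstar
  have hnorm : IsIntegral ℤ (QuadraticAlgebra.norm z) := by
    rw [← isIntegral_algebraMap_iff hinj, algebraMap_norm_eq_mul_star]
    exact hz.mul hstar
  obtain ⟨m, hm⟩ := IsIntegrallyClosed.isIntegral_iff.1 htrace
  obtain ⟨n, hn⟩ := IsIntegrallyClosed.isIntegral_iff.1 hnorm
  exact ⟨m, n, hm.symm, hn.symm⟩

theorem isIntegral_iff_mem_range_toRat (hd : Squarefree d) (hd4 : d % 4 ≠ 1)
    {z : QuadraticAlgebra ℚ d 0} : IsIntegral ℤ z ↔ z ∈ Set.range (toRat d) := by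
  refine ⟨fun hz ↦ ?_, ?_⟩
  · obtain ⟨m, n, hm, hn⟩ := exists_trace_norm_eq_intCast hz
    rw [trace_def, zero_mul, add_zero] at hm
    rw [QuadraticAlgebra.norm_def, zero_mul, zero_mul, add_zero] at hn
    obtain ⟨k, hk⟩ : ∃ k : ℤ, 2 * z.im = k :=
      exists_intCast_eq_of_mul_sq_eq_intCast hd (n := m ^ 2 - 4 * n) (by
        push_cast
        rw [← hm, ← hn]
        ring)
    have hmk : m ^ 2 - d * k ^ 2 = 4 * n := by
      have : (m : ℚ) ^ 2 - d * k ^ 2 = 4 * n := by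
        rw [← hm, ← hk, ← hn]
        ring
      exact_mod_cast this
    obtain ⟨⟨a, rfl⟩, b, rfl⟩ := even_and_even_of_four_dvd_sq_sub_mul_sq hd hd4 ⟨n, hmk⟩
    refine ⟨⟨a, b⟩, ?_⟩
    rw [toRat_apply]
    push_cast at hm hk
    ext
    · linarith
    · linarith
  · rintro ⟨w, rfl⟩
    exact (Algebra.IsIntegral.isIntegral w).map (toRat d)

theorem exists_isIntegralClosure (hd : Squarefree d) (hd4 : d % 4 ≠ 1) {F : Type*} [Field F]
    [Algebra ℚ F] (e : F ≃ₐ[ℚ] QuadraticAlgebra ℚ d 0) :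
    ∃ _ : Algebra (SqrtOrder d) F, IsIntegralClosure (SqrtOrder d) ℤ F := by
  let e' : F ≃ₐ[ℤ] QuadraticAlgebra ℚ d 0 := e.restrictScalars ℤ
  let f : SqrtOrder d →ₐ[ℤ] F := (e'.symm : _ →ₐ[ℤ] F).comp (toRat d)
  let : Algebra (SqrtOrder d) F := f.toAlgebra
  refine ⟨this, e'.symm.injective.comp toRat_injective, fun {x} ↦ ?_⟩
  rw [← isIntegral_algEquiv e', isIntegral_iff_mem_range_toRat hd hd4]
  exact exists_congr fun _ ↦ e'.symm_apply_eq.symm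

end IntegralClosure

section NegTwoMul

theorem squarefree_neg_two_mul {m : ℕ} (hm : Squarefree m) (hodd : Odd m) :
    Squarefree (-(2 * m) : ℤ) := by
  rw [← Int.squarefree_natAbs]
  simpa [Int.natAbs_mul] using
    (Nat.squarefree_mul (Nat.coprime_two_left.2 hodd)).2 ⟨Nat.prime_two.squarefree, hm⟩

theorem exists_isIntegralClosure_neg_two_mul {m : ℕ} (hm : Squarefree m) (hodd : Odd m)
    {F : Type*} [Field F] [Algebra ℚ F] (e : F ≃ₐ[ℚ] AdjoinRoot (X ^ 2 + C (2 * m : ℚ))) :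
    ∃ _ : Algebra (SqrtOrder (-(2 * m))) F, IsIntegralClosure (SqrtOrder (-(2 * m))) ℤ F := by
  refine exists_isIntegralClosure (squarefree_neg_two_mul hm hodd) (by omega) ?_
  rw [show ((-(2 * m) : ℤ) : ℚ) = -(2 * m) by push_cast; rfl]
  exact e.trans (adjoinRootEquivQuadraticAlgebra _)

variable {m : ℕ} [IsDedekindDomain (SqrtOrder (-(2 * m)))]

theorem absNorm_span_singleton_of_neg_two_mul (z : SqrtOrder (-(2 * m))) :
    (Ideal.absNorm (Ideal.span {z}) : ℤ) = z.re ^ 2 + 2 * m * z.im ^ 2 := by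
  have hnorm : QuadraticAlgebra.norm z = z.re ^ 2 + 2 * m * z.im ^ 2 := by
    rw [norm_eq]
    ring
  rw [absNorm_span_singleton, hnorm, Int.natAbs_of_nonneg (by positivity)]

theorem pairClass_two_mul_zero : pairClass (-(2 * m)) (2 * m) 0 = 1 := pairClass_eq_one (by simp)

theorem pairClass_two_zero_sq (hm : Odd m) : pairClass (-(2 * m)) 2 0 ^ 2 = 1 :=
  pairClass_zero_sq (c := -m)
    (by simpa using (Nat.coprime_two_left.2 hm).isCoprime) (by push_cast; ring)

theorem pairClass_two_zero_ne_one (hm : 1 < m) : pairClass (-(2 * m)) 2 0 ≠ 1 := by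
  rw [pairClass, Ne, ClassGroup.mk0_eq_one_iff]
  rintro ⟨z, hz : pairIdeal _ 2 0 = Ideal.span {z}⟩
  have hnorm : z.re ^ 2 + 2 * m * z.im ^ 2 = 2 := by
    rw [← absNorm_span_singleton_of_neg_two_mul, ← hz, absNorm_pairIdeal (by simp), Nat.cast_ofNat]
  have him : z.im = 0 := by
    by_contra him
    have him : 0 < z.im ^ 2 := by positivity
    nlinarith [sq_nonneg z.re]
  exact Int.prime_two.not_isSquare ⟨z.re, by simpa [him, sq] using hnorm.symm⟩

theorem pairClass_sq_eq_pairClass_two_zero (hm : Squarefree m) (hodd : Odd m) {u : ℕ} {v : ℤ}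
    (huv : (u : ℤ) ^ 2 = 2 * v ^ 2 + m) :
    pairClass (-(2 * m)) u (2 * v) ^ 2 = pairClass (-(2 * m)) 2 0 := by
  have hcop : IsCoprime (u : ℤ) (2 * v) := isCoprime_of_sq_eq_two_mul_sq_add
    (Int.squarefree_natCast.2 hm) ((Int.odd_coe_nat m).2 hodd) huv
  have hu2 : IsCoprime (u : ℤ) (2 : ℕ) := hcop.of_mul_right_left
  have hmul : pairClass (-(2 * m)) u (2 * v) ^ 2 * pairClass (-(2 * m)) 2 (2 * v) = 1 :=
    pairClass_sq_mul_pairClass (hu2.mul_right hcop) (Nat.isCoprime_iff_coprime.1 hu2)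
      (by push_cast; linear_combination -2 * huv)
  have htwo : pairClass (-(2 * m)) 2 (2 * v) = pairClass (-(2 * m)) 2 0 := by
    simpa [mul_comm] using pairClass_add_mul (d := -(2 * m)) 2 0 v
  rw [htwo] at hmul
  exact mul_right_cancel (hmul.trans ((sq _).symm.trans (pairClass_two_zero_sq hodd)).symm)

theorem pairClass_zero_eq_one_or (hm : m.Prime) (hodd : Odd m) {a : ℕ} (ha : a ∣ 2 * m) :
    pairClass (-(2 * m)) a 0 = 1 ∨ pairClass (-(2 * m)) a 0 = pairClass (-(2 * m)) 2 0 := by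
  obtain ⟨a₁, a₂, ha₁, ha₂, rfl⟩ := Nat.dvd_mul.1 ha
  rcases (Nat.dvd_prime Nat.prime_two).1 ha₁ with rfl | rfl <;>
    rcases (Nat.dvd_prime hm).1 ha₂ with rfl | rfl
  · exact .inl (pairClass_one 0)
  · right
    rw [one_mul]
    refine mul_left_cancel (a := pairClass _ 2 0) ?_
    rw [pairClass_mul_pairClass (Nat.coprime_two_left.2 hodd), pairClass_two_mul_zero, ← sq,
      pairClass_two_zero_sq hodd]
  · exact .inr rfl
  · exact .inl pairClass_two_mul_zero

theorem sq_eq_one_iff (hm : m.Prime) (hodd : Odd m) (c : ClassGroup (SqrtOrder (-(2 * m)))) :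
    c ^ 2 = 1 ↔ c = 1 ∨ c = pairClass (-(2 * m)) 2 0 := by
  constructor
  · intro hc
    obtain ⟨a, ha, rfl⟩ := exists_eq_pairClass_of_sq_eq_one (by simp [hm.pos]) (by simp)
      (squarefree_neg_two_mul hm.squarefree hodd) hc
    refine pairClass_zero_eq_one_or hm hodd ?_
    simpa [Int.natCast_dvd, Int.natAbs_mul] using ha
  · rintro (rfl | rfl)
    exacts [one_pow 2, pairClass_two_zero_sq hodd]

theorem idealGenusChar_eq_one (hm : m % 8 = 7) (I : (Ideal (SqrtOrder (-(2 * m))))⁰)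
    (hI : (I : Ideal (SqrtOrder (-(2 * m)))).IsPrincipal) : idealGenusChar _ I = 1 := by
  obtain ⟨z, hz : (I : Ideal (SqrtOrder (-(2 * m)))) = Ideal.span {z}⟩ := hI
  have hm' : (m : ℤ) % 8 = 7 := by omega
  have habsNorm := absNorm_span_singleton_of_neg_two_mul z
  rw [← hz] at habsNorm
  exact oddPartχ₈_eq_one_of_eq_sq_add hm' (Ideal.absNorm_ne_zero_iff_mem_nonZeroDivisors.2 I.2)
    habsNorm

/-- The genus character of `ℤ[√-2m]` attached to the factor `8` of its discriminant: the class of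
an ideal of odd norm `n` is sent to `χ₈ n`. -/
noncomputable def genusChar (hm : m % 8 = 7) : ClassGroup (SqrtOrder (-(2 * m))) →* ℤˣ :=
  (classGroupLift (idealGenusChar _) (idealGenusChar_eq_one hm)).toHomUnits

theorem genusChar_pairClass (hm : m % 8 = 7) {n : ℕ} {x : ℤ} (hx : (n : ℤ) ∣ x ^ 2 + 2 * m) :
    (genusChar hm (pairClass (-(2 * m)) n x) : ℤ) = oddPartχ₈ n := by
  have hnorm : Ideal.absNorm (pairIdeal (-(2 * m)) n x) = n :=
    absNorm_pairIdeal (by simpa using hx)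
  rw [genusChar, MonoidHom.coe_toHomUnits, pairClass, classGroupLift_mk0, idealGenusChar_apply,
    hnorm]

theorem genusChar_ne_one (hp : m.Prime) (hm : m % 8 = 7) : genusChar hm ≠ 1 := fun h ↦ by
  obtain ⟨q, hq, x, hx⟩ := exists_prime_mod_eight_eq_five_and_dvd_sq_add hp hm
  have hχ := genusChar_pairClass hm hx
  rw [h, MonoidHom.one_apply, Units.val_one, eq_comm,
    oddPartχ₈_eq_one_iff (Nat.odd_iff.2 (by omega))] at hχ
  omega

theorem exists_sq_eq_and_isSquare_iff [Finite (ClassGroup (SqrtOrder (-(2 * m))))]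
    (hp : m.Prime) (hm : m % 8 = 7) :
    ∃ i : ClassGroup (SqrtOrder (-(2 * m))),
      i ^ 2 = pairClass (-(2 * m)) 2 0 ∧ (IsSquare i ↔ m % 16 = 15) := by
  have : Fact m.Prime := ⟨hp⟩
  have hodd : Odd m := Nat.odd_iff.2 (by omega)
  obtain ⟨u, v, huv⟩ := exists_sq_eq_two_mul_sq_add hp
    ((ZMod.exists_sq_eq_two_iff (by omega)).2 (.inr hm))
  have hu : Odd u := by
    have hodd_sq : Odd ((u : ℤ) ^ 2) :=
      huv ▸ (even_two_mul (v ^ 2)).add_odd ((Int.odd_coe_nat m).2 hodd)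
    exact_mod_cast (Int.odd_pow' two_ne_zero).1 hodd_sq
  refine ⟨pairClass _ u (2 * v),
    pairClass_sq_eq_pairClass_two_zero hp.squarefree hodd huv, ?_⟩
  have hdvd : (u : ℤ) ∣ (2 * v) ^ 2 + 2 * m := ⟨2 * u, by linear_combination -2 * huv⟩
  rw [isSquare_iff_map_eq_one (pairClass_two_zero_ne_one hp.one_lt) (sq_eq_one_iff hp hodd)
    (genusChar_ne_one hp hm), ← Units.val_eq_one, genusChar_pairClass hm hdvd,
    oddPartχ₈_eq_one_iff hu]
  have := emod_eight_iff_of_sq_eq_two_mul_sq_add (m := m) (by omega) huv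
  omega

end NegTwoMul

end SqrtOrder

/-- **Hasse.** For a prime `p ≡ -1 (mod 8)`, writing `h(-2p)` for the class
number of the imaginary quadratic field `ℚ(√(-2p)) = ℚ[x]/(x² + 2p)`, one has
`4 ∥ h(-2p)` (i.e. `4 ∣ h(-2p)` and `8 ∤ h(-2p)`) if and only if `p ≡ 7 (mod 16)`. -/
theorem four_exactly_divides_classNumber_neg_two_p_iff
    (p : ℕ) (hp : p.Prime) (hmod : p % 8 = 7)
    (F : Type*) [Field F] [NumberField F]
    (hF : Nonempty (F ≃ₐ[ℚ] AdjoinRoot (X ^ 2 + C (2 * p : ℚ)))) :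
    (4 ∣ classNumber F ∧ ¬ 8 ∣ classNumber F) ↔ p % 16 = 7 := by
  obtain ⟨e⟩ := hF
  have hodd : Odd p := Nat.odd_iff.2 (by omega)
  obtain ⟨_, _⟩ := SqrtOrder.exists_isIntegralClosure_neg_two_mul hp.squarefree hodd e
  let R := SqrtOrder (-(2 * p))
  have : IsDomain R := (IsIntegralClosure.algebraMap_injective R ℤ F).isDomain _
  have : IsDedekindDomain R := IsIntegralClosure.isDedekindDomain ℤ ℚ F R
  have : Finite (ClassGroup R) := finite_classGroup_of_isIntegralClosure_int R F
  obtain ⟨i, hi, hi_sq⟩ := SqrtOrder.exists_sq_eq_and_isSquare_iff hp hmod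
  have htors (c : ClassGroup R) : c ^ 2 = 1 ↔ c = 1 ∨ c = i ^ 2 :=
    hi ▸ SqrtOrder.sq_eq_one_iff hp hodd c
  have hne : i ^ 2 ≠ 1 := hi ▸ SqrtOrder.pairClass_two_zero_ne_one hp.one_lt
  have h4 : 4 ∣ classNumber F := by
    rw [classNumber_eq_natCard_classGroup R F]
    exact four_dvd_natCard hne ((htors _).2 (.inr rfl))
  have h8 : 8 ∣ classNumber F ↔ p % 16 = 15 := by
    rw [classNumber_eq_natCard_classGroup R F, eight_dvd_natCard_iff_isSquare hne htors, hi_sq]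
  omega
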